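/- arXiv:2205.00741 — 2 statements merged into one kernel-verified Lean document; each statement's English description precedes it below -/
import Mathlib

section
/- Suppose Z ≤ 1/e and n ≥ max{8e, 16·log(1/Z)}. Let b_1, …, b_T be any real sequence with |b_t| ≤ μ for some 0 < μ ≤ 1, and let x_1, …, x_{T+1} be the deviations produced by DNP-cu. Then for every s ∈ [1, T], writing τ = s, the cumulative reward over the interval [1, s] satisfies Σ_{t=1}^{s} ( g(x_t)·b_t − (1/μ)·|g(x_t) − g(x_{t+1})| ) ≥ max( 0, Σ_{t=1}^{s} b_t − (τ/n)·(U(n) + 2μ) − U(n) ) − Z·τ. -/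
/-- The Gauss error function `erf(x) = (2/√π) ∫₀ˣ e^{−s²} ds`. -/
noncomputable def erf (x : ℝ) : ℝ :=
  (2 / Real.sqrt Real.pi) * ∫ s in (0:ℝ)..x, Real.exp (-s ^ 2)

/-- The unclipped confidence function `g̃(x) = √(n/8) · Z · erf(x/√(8n)) · e^{x²/(16n)}`. -/
noncomputable def gtilde (n Z x : ℝ) : ℝ :=
  Real.sqrt (n / 8) * Z * erf (x / Real.sqrt (8 * n)) * Real.exp (x ^ 2 / (16 * n))

/-- The confidence function `g(x)`, the projection of `g̃(x)` onto `[0,1]`. -/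
noncomputable def gconf (n Z x : ℝ) : ℝ := min (max (gtilde n Z x) 0) 1

lemma erf_hasDerivAt (x : ℝ) :
    HasDerivAt erf ((2 / Real.sqrt Real.pi) * Real.exp (-x ^ 2)) x := by
  have hc : Continuous (fun s : ℝ => Real.exp (-s ^ 2)) := by fun_prop
  have := intervalIntegral.integral_hasDerivAt_right (hc.intervalIntegrable 0 x)
    (hc.stronglyMeasurableAtFilter _ _) hc.continuousAt
  exact this.const_mul _

lemma erf_nonneg {x : ℝ} (hx : 0 ≤ x) : 0 ≤ erf x := by
  unfold erf
  have : 0 ≤ ∫ s in (0:ℝ)..x, Real.exp (-s ^ 2) :=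
    intervalIntegral.integral_nonneg hx (fun u _ => (Real.exp_pos _).le)
  positivity

lemma erf_nonpos {x : ℝ} (hx : x ≤ 0) : erf x ≤ 0 := by
  unfold erf
  have : 0 ≤ ∫ s in x..(0:ℝ), Real.exp (-s ^ 2) :=
    intervalIntegral.integral_nonneg hx (fun u _ => (Real.exp_pos _).le)
  rw [intervalIntegral.integral_symm]
  have h2 : 0 ≤ 2 / Real.sqrt Real.pi := by positivity
  nlinarith [mul_nonneg h2 this]

lemma gt_nonneg {n Z x : ℝ} (hn : 0 < n) (hZ : 0 < Z) (hx : 0 ≤ x) : 0 ≤ gtilde n Z x := by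
  unfold gtilde
  have : 0 ≤ erf (x / Real.sqrt (8 * n)) := erf_nonneg (by positivity)
  positivity

lemma gt_nonpos {n Z x : ℝ} (hZ : 0 < Z) (hx : x ≤ 0) : gtilde n Z x ≤ 0 := by
  unfold gtilde
  have h : erf (x / Real.sqrt (8 * n)) ≤ 0 :=
    erf_nonpos (div_nonpos_of_nonpos_of_nonneg hx (Real.sqrt_nonneg _))
  have h1 : 0 ≤ Real.sqrt (n / 8) * Z := by positivity
  exact mul_nonpos_of_nonpos_of_nonneg (mul_nonpos_of_nonneg_of_nonpos h1 h) (Real.exp_pos _).le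

lemma gt_deriv {n Z : ℝ} (hn : 0 < n) (x : ℝ) :
    HasDerivAt (gtilde n Z)
      (Z / (4 * Real.sqrt Real.pi) * Real.exp (-(x ^ 2 / (16 * n))) + x * gtilde n Z x / (8 * n)) x := by
  have h1 : HasDerivAt (fun x : ℝ => x / Real.sqrt (8 * n)) (1 / Real.sqrt (8 * n)) x :=
    (hasDerivAt_id x).div_const _
  have h2 := (erf_hasDerivAt (x / Real.sqrt (8 * n))).comp x h1
  have h3 : HasDerivAt (fun x : ℝ => Real.exp (x ^ 2 / (16 * n)))
      (Real.exp (x ^ 2 / (16 * n)) * ((2 * x) / (16 * n))) x := by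
    have := ((hasDerivAt_pow 2 x).div_const (16 * n)).exp
    simpa using this
  have h4 := (h2.const_mul (Real.sqrt (n / 8) * Z)).mul h3
  have e1 : Real.exp (-(x / Real.sqrt (8 * n)) ^ 2) * Real.exp (x ^ 2 / (16 * n))
      = Real.exp (-(x ^ 2 / (16 * n))) := by
    rw [← Real.exp_add, div_pow, Real.sq_sqrt (by positivity)]
    congr 1
    field_simp
    ring
  have e2 : Real.sqrt (n / 8) = Real.sqrt (8 * n) / 8 := by
    rw [show n / 8 = (8 * n) / 8 ^ 2 by ring, Real.sqrt_div (by positivity),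
      Real.sqrt_sq (by norm_num)]
  have hs : Real.sqrt (8 * n) ≠ 0 := by positivity
  have hp : Real.sqrt Real.pi ≠ 0 := by positivity
  refine h4.congr_deriv ?_
  rw [← e1]
  unfold gtilde
  rw [e2]
  simp only [Function.comp]
  field_simp
  ring

lemma gt_mono {n Z : ℝ} (hn : 0 < n) (hZ : 0 < Z) : MonotoneOn (gtilde n Z) (Set.Ici 0) := by
  apply monotoneOn_of_deriv_nonneg (convex_Ici 0)
  · exact fun x _ => (gt_deriv hn x).continuousAt.continuousWithinAt
  · exact fun x _ => (gt_deriv hn x).differentiableAt.differentiableWithinAt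
  · intro x hx
    rw [interior_Ici] at hx
    have hx : 0 < x := hx
    rw [(gt_deriv hn x).deriv]
    have := gt_nonneg hn hZ hx.le
    positivity

lemma gt_lip {n Z u v : ℝ} (hn : 0 < n) (hZ : 0 < Z) (hu : 0 ≤ u) (huv : u ≤ v) :
    gtilde n Z v - gtilde n Z u ≤ (Z / 7 + v * gtilde n Z v / (8 * n)) * (v - u) := by
  apply (convex_Icc u v).image_sub_le_mul_sub_of_deriv_le
    (fun x _ => (gt_deriv hn x).continuousAt.continuousWithinAt)
    (fun x _ => (gt_deriv hn x).differentiableAt.differentiableWithinAt)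
    _ u ⟨le_rfl, huv⟩ v ⟨huv, le_rfl⟩ huv
  intro w hw
  rw [interior_Icc] at hw
  obtain ⟨hw1, hw2⟩ := hw
  have hw0 : 0 ≤ w := by linarith
  rw [(gt_deriv hn w).deriv]
  have hm : gtilde n Z w ≤ gtilde n Z v := gt_mono hn hZ hw0 (hu.trans huv) hw2.le
  have h0 := gt_nonneg hn hZ hw0
  have he : Real.exp (-(w ^ 2 / (16 * n))) ≤ 1 := by
    rw [Real.exp_le_one_iff]
    have : 0 ≤ w ^ 2 / (16 * n) := by positivity
    linarith
  have hs : (7:ℝ) / 4 ≤ Real.sqrt Real.pi := by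
    apply Real.le_sqrt_of_sq_le
    nlinarith [Real.pi_gt_d2]
  have h1 : Z / (4 * Real.sqrt Real.pi) ≤ Z / 7 :=
    div_le_div_of_nonneg_left hZ.le (by norm_num) (by linarith)
  have h2 : Z / (4 * Real.sqrt Real.pi) * Real.exp (-(w ^ 2 / (16 * n))) ≤ Z / 7 * 1 :=
    mul_le_mul h1 he (Real.exp_pos _).le (by positivity)
  have h3 : w * gtilde n Z w / (8 * n) ≤ v * gtilde n Z v / (8 * n) := by
    apply div_le_div_of_nonneg_right _ (by positivity)
    exact mul_le_mul hw2.le hm h0 (by linarith)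
  linarith

lemma gc_nonneg (n Z x : ℝ) : 0 ≤ gconf n Z x := by unfold gconf; positivity

lemma gc_le_one (n Z x : ℝ) : gconf n Z x ≤ 1 := min_le_right _ _

lemma gc_neg {n Z x : ℝ} (hZ : 0 < Z) (hx : x ≤ 0) : gconf n Z x = 0 := by
  unfold gconf
  rw [max_eq_right (gt_nonpos hZ hx)]
  simp

lemma gc_mono {n Z : ℝ} (hn : 0 < n) (hZ : 0 < Z) : Monotone (gconf n Z) := by
  intro u v huv
  rcases le_total u 0 with hu | hu
  · rw [gc_neg hZ hu]; exact gc_nonneg _ _ _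
  · unfold gconf
    exact min_le_min_right _ (max_le_max_right _ (gt_mono hn hZ hu (hu.trans huv) huv))

lemma gc_big {n Z U x : ℝ} (hn : 0 < n) (hZ : 0 < Z) (hU : 0 < U) (hUd : gtilde n Z U = 1)
    (hx : U ≤ x) : gconf n Z x = 1 := by
  have h := gt_mono hn hZ (show (0:ℝ) ≤ U from hU.le) (show (0:ℝ) ≤ x from hU.le.trans hx) hx
  rw [hUd] at h
  unfold gconf
  rw [max_eq_left (by linarith), min_eq_right h]

lemma gc_mid {n Z U x : ℝ} (hn : 0 < n) (hZ : 0 < Z) (hUd : gtilde n Z U = 1)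
    (h0 : 0 ≤ x) (hx : x ≤ U) : gconf n Z x = gtilde n Z x := by
  have h := gt_mono hn hZ (show (0:ℝ) ≤ x from h0) (show (0:ℝ) ≤ U from h0.trans hx) hx
  rw [hUd] at h
  unfold gconf
  rw [max_eq_left (gt_nonneg hn hZ h0), min_eq_left h]

lemma gc_xg {n Z : ℝ} (hZ : 0 < Z) (x : ℝ) : 0 ≤ x * gconf n Z x := by
  rcases le_total x 0 with h | h
  · rw [gc_neg hZ h]; simp
  · exact mul_nonneg h (gc_nonneg _ _ _)

lemma gc_lip {n Z U u v : ℝ} (hn : 0 < n) (hZ : 0 < Z) (hU : 0 < U) (hUd : gtilde n Z U = 1)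
    (huv : u ≤ v) :
    gconf n Z v - gconf n Z u ≤ (Z / 7 + v * gconf n Z v / (8 * n)) * (v - u) := by
  have key : ∀ u v, 0 ≤ u → u ≤ v →
      gconf n Z v - gconf n Z u ≤ (Z / 7 + v * gconf n Z v / (8 * n)) * (v - u) := by
    intro u v hu huv
    rcases le_total v U with hv | hv
    · rw [gc_mid hn hZ hUd hu (huv.trans hv), gc_mid hn hZ hUd (hu.trans huv) hv]
      exact gt_lip hn hZ hu huv
    · rw [gc_big hn hZ hU hUd hv]
      rcases le_total U u with hu2 | hu2
      · rw [gc_big hn hZ hU hUd hu2]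
        have : 0 ≤ v - u := by linarith
        have : 0 ≤ v := by linarith
        simp only [sub_self]
        positivity
      · rw [gc_mid hn hZ hUd hu hu2]
        have h := gt_lip hn hZ hu hu2
        rw [hUd] at h
        refine h.trans ?_
        have : 0 ≤ v := by linarith
        have : 0 ≤ U - u := by linarith
        gcongr
  rcases le_total 0 u with hu | hu
  · exact key u v hu huv
  · rw [gc_neg hZ hu]
    have hxg := gc_xg (n := n) hZ v
    have hB : 0 ≤ Z / 7 + v * gconf n Z v / (8 * n) := by positivity
    rcases le_total v 0 with hv | hv
    · rw [gc_neg hZ hv] at hB ⊢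
      have := mul_nonneg hB (sub_nonneg.2 huv)
      linarith
    · have := key 0 v le_rfl hv
      rw [gc_neg hZ le_rfl] at this
      refine this.trans ?_
      gcongr

noncomputable def Phi (n Z x : ℝ) : ℝ := ∫ s in (0:ℝ)..x, gconf n Z s

lemma Phi_convex {n Z : ℝ} (hn : 0 < n) (hZ : 0 < Z) (x y : ℝ) :
    Phi n Z y - Phi n Z x ≤ gconf n Z y * (y - x) := by
  have hm := gc_mono hn hZ
  have hi : ∀ a b, IntervalIntegrable (gconf n Z) MeasureTheory.volume a b :=
    fun a b => hm.intervalIntegrable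
  unfold Phi
  rw [intervalIntegral.integral_interval_sub_left (hi _ _) (hi _ _)]
  rcases le_total x y with h | h
  · have := intervalIntegral.integral_mono_on h (hi x y)
      (intervalIntegrable_const (c := gconf n Z y)) (fun s hs => hm hs.2)
    rw [intervalIntegral.integral_const, smul_eq_mul] at this
    linarith
  · have := intervalIntegral.integral_mono_on h (intervalIntegrable_const (c := gconf n Z y))
      (hi y x) (fun s hs => hm hs.1)
    rw [intervalIntegral.integral_const, smul_eq_mul] at this
    rw [intervalIntegral.integral_symm]
    linarith

lemma Phi_zero (n Z : ℝ) : Phi n Z 0 = 0 := by simp [Phi]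

lemma Phi_nonneg {n Z : ℝ} (hn : 0 < n) (hZ : 0 < Z) (x : ℝ) : 0 ≤ Phi n Z x := by
  have := Phi_convex hn hZ x 0
  rw [Phi_zero, gc_neg hZ le_rfl] at this
  linarith

lemma Phi_neg {n Z : ℝ} (hn : 0 < n) (hZ : 0 < Z) {x : ℝ} (hx : x ≤ 0) : Phi n Z x = 0 := by
  have := Phi_convex hn hZ 0 x
  rw [Phi_zero, gc_neg hZ hx] at this
  linarith [Phi_nonneg hn hZ x]

lemma Phi_ge {n Z U : ℝ} (hn : 0 < n) (hZ : 0 < Z) (hU : 0 < U) (hUd : gtilde n Z U = 1)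
    (x : ℝ) : x - U ≤ Phi n Z x := by
  have := Phi_convex hn hZ x U
  rw [gc_big hn hZ hU hUd le_rfl] at this
  linarith [Phi_nonneg hn hZ U]

lemma step_down {n Z U μ x y : ℝ} (hn : 0 < n) (hZ : 0 < Z) (hU : 0 < U)
    (hUd : gtilde n Z U = 1) (hμ0 : 0 < μ) (hμ1 : μ ≤ 1) (hyx : y ≤ x) (hd : x - y ≤ 2 * μ) :
    Phi n Z y - Phi n Z x - gconf n Z x * (y - x) + (1 / μ) * |gconf n Z x - gconf n Z y|
      ≤ x * gconf n Z x / n + Z := by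
  have h1 := Phi_convex hn hZ x y
  have h2 := gc_lip hn hZ hU hUd hyx
  have hm := gc_mono hn hZ hyx
  have hxg := gc_xg (n := n) hZ x
  rw [abs_of_nonneg (sub_nonneg.2 hm)]
  set g := gconf n Z x
  set h := gconf n Z y
  set B := Z / 7 + x * g / (8 * n) with hBdef
  have hB : 0 ≤ B := by positivity
  have hP : 0 ≤ x * g / n := by positivity
  have hB2 : 6 * B ≤ x * g / n + Z := by
    have : x * g / (8 * n) = (x * g / n) / 8 := by field_simp
    rw [hBdef, this]; linarith
  have hd0 : 0 ≤ x - y := by linarith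
  have h3 : (1 / μ) * (g - h) ≤ 2 * B := by
    rw [one_div, inv_mul_le_iff₀ hμ0]
    nlinarith [mul_le_mul_of_nonneg_left hd hB]
  have h4 : (g - h) * (x - y) ≤ 4 * B := by
    have : g - h ≤ 2 * B := by
      nlinarith [mul_le_mul_of_nonneg_left hd hB, mul_le_mul_of_nonneg_left hμ1 hB]
    have h5 : x - y ≤ 2 := by linarith
    have := mul_le_mul this h5 hd0 (by positivity)
    linarith
  nlinarith

lemma step_up {n Z U μ x y : ℝ} (hn : 16 ≤ n) (hZ : 0 < Z) (hU : 0 < U)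
    (hUd : gtilde n Z U = 1) (hμ0 : 0 < μ) (hμ1 : μ ≤ 1) (hx0 : 0 ≤ x) (hxn : x ≤ n)
    (hxy : x ≤ y) (hd : y - x ≤ μ) :
    Phi n Z y - Phi n Z x - gconf n Z x * (y - x) + (1 / μ) * |gconf n Z x - gconf n Z y|
      ≤ x * gconf n Z x / n + Z := by
  have hn0 : 0 < n := by linarith
  have h1 := Phi_convex hn0 hZ x y
  have h2 := gc_lip hn0 hZ hU hUd hxy
  have h2' := gc_lip hn0 hZ hU hUd hx0
  rw [gc_neg hZ le_rfl] at h2'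
  have hm := gc_mono hn0 hZ hxy
  have hg0 := gc_nonneg n Z x
  rw [abs_sub_comm, abs_of_nonneg (sub_nonneg.2 hm)]
  set g := gconf n Z x
  set h := gconf n Z y
  have hh0 : 0 ≤ h := hg0.trans hm
  have hd0 : 0 ≤ y - x := by linarith
  set B := Z / 7 + y * h / (8 * n) with hBdef
  have hB : 0 ≤ B := by
    have : 0 ≤ y := by linarith
    positivity
  have h3 : (1 / μ) * (h - g) ≤ B := by
    rw [one_div, inv_mul_le_iff₀ hμ0]
    nlinarith [mul_le_mul_of_nonneg_left hd hB]
  have hgB : h - g ≤ B := by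
    nlinarith [mul_le_mul_of_nonneg_left hd hB, mul_le_mul_of_nonneg_left hμ1 hB]
  have h4 : (h - g) * (y - x) ≤ B := by
    have h5 : y - x ≤ 1 := by linarith
    have := mul_le_mul hgB h5 hd0 hB
    linarith
  -- normalise
  obtain ⟨p, hp⟩ : ∃ p, p = x / n := ⟨_, rfl⟩
  obtain ⟨q, hq⟩ : ∃ q, q = 1 / n := ⟨_, rfl⟩
  have hp0 : 0 ≤ p := by rw [hp]; positivity
  have hp1 : p ≤ 1 := by rw [hp, div_le_one hn0]; exact hxn
  have hq0 : 0 < q := by rw [hq]; positivity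
  have hq1 : q ≤ 1 / 16 := by rw [hq]; exact one_div_le_one_div_of_le (by norm_num) hn
  have hyn : y / n ≤ p + q := by
    rw [hp, hq, ← add_div]
    exact div_le_div_of_nonneg_right (by linarith) hn0.le
  have hBle : B ≤ Z / 7 + (p + q) * h / 8 := by
    have e : y * h / (8 * n) = (y / n) * h / 8 := by field_simp
    rw [hBdef, e]
    nlinarith [mul_le_mul_of_nonneg_right hyn hh0]
  have hqg : q * g ≤ p * (Z / 7 + p * g / 8) := by
    have e : (Z / 7 + x * g / (8 * n)) * (x - 0) * q = p * (Z / 7 + p * g / 8) := by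
      rw [hp, hq]; field_simp; ring
    rw [← e, mul_comm q g]
    exact mul_le_mul_of_nonneg_right (by linarith) hq0.le
  have hpg : 0 ≤ p * g := mul_nonneg hp0 hg0
  have hqg2 : q * g ≤ Z / 7 + p * g / 8 := by
    refine hqg.trans ?_
    have : 0 ≤ Z / 7 + p * g / 8 := by positivity
    nlinarith
  have hh : h ≤ 6 / 5 * g + Z / 5 := by
    have : (p + q) * h ≤ 17 / 16 * h := mul_le_mul_of_nonneg_right (by linarith) hh0
    linarith
  have hfin : (p + q) * h ≤ 6 / 5 * (p * g) + 6 / 5 * (q * g) + 17 / 80 * Z := by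
    have a := mul_le_mul_of_nonneg_left hh (show 0 ≤ p + q by positivity)
    have b : (p + q) * Z ≤ 17 / 16 * Z := mul_le_mul_of_nonneg_right (by linarith) hZ.le
    nlinarith
  have e : x * g / n = p * g := by rw [hp]; field_simp
  rw [e]
  nlinarith

lemma step_all {n Z U μ x y b : ℝ} (hn : 16 ≤ n) (hZ : 0 < Z) (hU : 0 < U)
    (hUd : gtilde n Z U = 1) (hμ0 : 0 < μ) (hμ1 : μ ≤ 1) (hb : |b| ≤ μ)
    (hxn : |x| ≤ n * μ)
    (hy : y = (1 - 1 / n) * x + b ∨ y = (1 - 1 / n) * x) :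
    Phi n Z y - Phi n Z x - gconf n Z x * (y - x) + (1 / μ) * |gconf n Z x - gconf n Z y|
      ≤ x * gconf n Z x / n + Z := by
  have hn0 : 0 < n := by linarith
  obtain ⟨c, hc, hy⟩ : ∃ c, |c| ≤ μ ∧ y = x - x / n + c := by
    rcases hy with hy | hy
    · exact ⟨b, hb, by rw [hy]; ring⟩
    · exact ⟨0, by simpa using hμ0.le, by rw [hy]; ring⟩
  rw [abs_le] at hc hxn
  have hp1 : x / n ≤ μ := by rw [div_le_iff₀ hn0]; linarith
  rcases le_total y x with h | h
  · exact step_down hn0 hZ hU hUd hμ0 hμ1 h (by linarith)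
  · rcases le_total 0 x with hx | hx
    · have : 0 ≤ x / n := by positivity
      exact step_up hn hZ hU hUd hμ0 hμ1 hx (by nlinarith) h (by linarith)
    · rw [Phi_neg hn0 hZ hx, gc_neg hZ hx]
      have hyμ : y ≤ μ := by
        have : x - x / n ≤ 0 := by
          have : x - x / n = x * (1 - 1 / n) := by ring
          rw [this]
          apply mul_nonpos_of_nonpos_of_nonneg hx
          have : 1 / n ≤ 1 := by rw [div_le_one hn0]; linarith
          linarith
        linarith
      rcases le_total y 0 with hy0 | hy0
      · rw [Phi_neg hn0 hZ hy0, gc_neg hZ hy0]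
        simp [hZ.le]
      · have := step_up hn hZ hU hUd hμ0 hμ1 le_rfl hn0.le hy0 (by linarith)
        rw [Phi_zero, gc_neg hZ le_rfl] at this
        simpa using this

/-- **Theorem 1 (second bound): reward lower bound for DNP-cu over intervals starting at 1.** -/
theorem dnp_cu_reward_lower_bound_from_one
    (n Z : ℝ) (hn0 : 0 < n) (hZ0 : 0 < Z) (hZ : Z ≤ 1 / Real.exp 1)
    (hn : n ≥ max (8 * Real.exp 1) (16 * Real.log (1 / Z)))
    (U : ℝ) (hUpos : 0 < U) (hUdef : gtilde n Z U = 1)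
    (hUuniq : ∀ y, 0 < y → gtilde n Z y = 1 → y = U)
    (T : ℕ) (b x : ℕ → ℝ)
    (μ : ℝ) (hμ0 : 0 < μ) (hμ1 : μ ≤ 1)
    (hb : ∀ t, 1 ≤ t → t ≤ T → |b t| ≤ μ)
    (hx1 : x 1 = 0)
    (hxrec : ∀ t, 1 ≤ t → t ≤ T →
      x (t + 1) = if (0 ≤ x t ∧ x t ≤ U) ∨ (x t < 0 ∧ 0 < b t) ∨ (U < x t ∧ b t < 0)
        then (1 - 1 / n) * x t + b t
        else (1 - 1 / n) * x t)
    (s : ℕ) (hs1 : 1 ≤ s) (hsT : s ≤ T) :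
    ∑ t ∈ Finset.Icc 1 s,
        (gconf n Z (x t) * b t - (1 / μ) * |gconf n Z (x t) - gconf n Z (x (t + 1))|)
      ≥ max 0 (∑ t ∈ Finset.Icc 1 s, b t
            - (s : ℝ) * (U + 2 * μ) / n - U)
        - Z * (s : ℝ) := by
  have hn16 : 16 ≤ n := by
    have h1 := (le_max_left _ _).trans hn
    have := Real.exp_one_gt_d9
    linarith
  have hρ0 : 0 ≤ 1 - 1 / n := by
    have : 1 / n ≤ 1 := by rw [div_le_one hn0]; linarith
    linarith
  have hρ1 : 1 - 1 / n ≤ 1 := by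
    have : 0 ≤ 1 / n := by positivity
    linarith
  have inv : ∀ t, t ≤ T → |x (t + 1)| ≤ n * μ ∧ x (t + 1) ≤ U + μ := by
    intro t
    induction t with
    | zero =>
      intro _
      simp only [zero_add, hx1, abs_zero]
      constructor <;> positivity
    | succ k ih =>
      intro hk
      obtain ⟨i1, i2⟩ := ih (by omega)
      have hbk := hb (k + 1) (by omega) hk
      rw [hxrec (k + 1) (by omega) hk]
      have hρx : |(1 - 1 / n) * x (k + 1)| ≤ n * μ - μ := by
        rw [abs_mul, abs_of_nonneg hρ0]
        have := mul_le_mul_of_nonneg_left i1 hρ0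
        have e : (1 - 1 / n) * (n * μ) = n * μ - μ := by field_simp
        linarith
      have hub : ∀ A, 0 ≤ A → x (k + 1) ≤ A → (1 - 1 / n) * x (k + 1) ≤ A := by
        intro A hA hxA
        have := mul_le_mul_of_nonneg_left hxA hρ0
        have := mul_le_mul_of_nonneg_right hρ1 hA
        linarith
      have hb' := abs_le.1 hbk
      split_ifs with hc
      · constructor
        · exact (abs_add_le _ _).trans (by linarith)
        · rcases hc with hc | hc | hc
          · linarith [hub U hUpos.le hc.2]
          · linarith [hub 0 le_rfl hc.1.le]
          · linarith [hub (U + μ) (by positivity) i2]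
      · exact ⟨by linarith, hub (U + μ) (by positivity) i2⟩
  have main : ∀ t, t ≤ T →
      Phi n Z (x (t + 1)) - Z * t ≤ ∑ t ∈ Finset.Icc 1 t,
        (gconf n Z (x t) * b t - (1 / μ) * |gconf n Z (x t) - gconf n Z (x (t + 1))|) ∧
      Phi n Z (x (t + 1)) - x (t + 1) - Z * t - t * (U + 2 * μ) / n
          + ∑ t ∈ Finset.Icc 1 t, b t ≤ ∑ t ∈ Finset.Icc 1 t,
        (gconf n Z (x t) * b t - (1 / μ) * |gconf n Z (x t) - gconf n Z (x (t + 1))|) := by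
    intro t
    induction t with
    | zero => intro _; simp [hx1, Phi_zero]
    | succ k ih =>
      intro hk
      obtain ⟨i1, i2⟩ := ih (by omega)
      obtain ⟨v1, v2⟩ := inv k (by omega)
      have hbk := hb (k + 1) (by omega) hk
      have hr := hxrec (k + 1) (by omega) hk
      rw [Finset.sum_Icc_succ_top (by omega), Finset.sum_Icc_succ_top (by omega)]
      have hst := step_all (y := x (k + 1 + 1)) hn16 hZ0 hUpos hUdef hμ0 hμ1 hbk v1 (by
        rw [hr]; split_ifs
        · exact Or.inl rfl
        · exact Or.inr rfl)
      have hxn : x (k + 1) / n ≤ (U + 2 * μ) / n :=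
        div_le_div_of_nonneg_right (by linarith) hn0.le
      have e3 : ((k + 1 : ℕ) : ℝ) * (U + 2 * μ) / n
          = k * (U + 2 * μ) / n + (U + 2 * μ) / n := by push_cast; ring
      have hUn : 0 ≤ (U + 2 * μ) / n := by positivity
      rw [e3]
      push_cast
      set A := ∑ t ∈ Finset.Icc 1 k,
        (gconf n Z (x t) * b t - (1 / μ) * |gconf n Z (x t) - gconf n Z (x (t + 1))|)
      set S := ∑ t ∈ Finset.Icc 1 k, b t
      set C := (1 / μ) * |gconf n Z (x (k + 1)) - gconf n Z (x (k + 1 + 1))|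
      have e5 : x (k + 1) * gconf n Z (x (k + 1)) / n
          = gconf n Z (x (k + 1)) * (x (k + 1) / n) := by ring
      rw [e5] at hst
      split_ifs at hr with hc
      · have e4 : x (k + 1 + 1) - x (k + 1) = b (k + 1) - x (k + 1) / n := by rw [hr]; ring
        rw [e4] at hst
        constructor
        · linarith
        · linarith
      · have e4 : x (k + 1 + 1) - x (k + 1) = - (x (k + 1) / n) := by rw [hr]; ring
        rw [e4] at hst
        push Not at hc
        obtain ⟨c1, c2, c3⟩ := hc
        rcases lt_or_ge (x (k + 1)) 0 with hneg | hpos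
        · have hb0 := c2 hneg
          have hxn0 : x (k + 1) / n ≤ 0 := div_nonpos_of_nonpos_of_nonneg hneg.le hn0.le
          rw [gc_neg hZ0 hneg.le] at hst ⊢
          constructor <;> linarith
        · have hU' := c1 hpos
          have hb0 := c3 hU'
          rw [gc_big hn0 hZ0 hUpos hUdef hU'.le] at hst ⊢
          have : 0 ≤ x (k + 1) / n := by positivity
          constructor <;> linarith
  obtain ⟨m1, m2⟩ := main s hsT
  have p1 := Phi_nonneg hn0 hZ0 (x (s + 1))
  have p2 := Phi_ge hn0 hZ0 hUpos hUdef (x (s + 1))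
  rw [ge_iff_le, sub_le_iff_le_add]
  apply max_le <;> linarith
end

section
/- Under the stated parameter setting, for every i ∈ [K] and every t ∈ [T], the iterates of A^i and B^i in smoothed OGD move slowly with constant M = 2: λ·‖w_t^i − w_{t+1}^i‖ ≤ 2D and λ·‖v_t^i − v_{t+1}^i‖ ≤ 2D. -/
/-- The window length of the i-th expert in smoothed OGD. -/
noncomputable def nfun (T i : ℕ) : ℝ := (T : ℝ) * (2 : ℝ) ^ ((1 : ℤ) - (i : ℤ))

/-- The step size of the i-th OGD expert in smoothed OGD. -/
noncomputable def etafun (T : ℕ) (D G lam : ℝ) (i : ℕ) : ℝ :=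
  (D / G) * Real.sqrt (1 / ((1 + 2 * lam) * nfun T i))

lemma erf_mono : Monotone erf := by
  apply monotone_of_deriv_nonneg
  · intro x; exact (erf_hasDerivAt x).differentiableAt
  · intro x; rw [(erf_hasDerivAt x).deriv]; positivity

lemma erf_zero' : erf 0 = 0 := by simp [erf]

lemma sqrt_pi_lt_two : Real.sqrt Real.pi < 2 := by
  rw [Real.sqrt_lt' (by norm_num)]
  linarith [Real.pi_lt_four]

lemma erf_one_gt : 1 / 2 < erf 1 := by
  have h1 : (2 / 3 : ℝ) ≤ ∫ s in (0:ℝ)..1, Real.exp (-s ^ 2) := by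
    have h2 : ∫ s in (0:ℝ)..1, (1 - s ^ 2) = 2 / 3 := by
      rw [intervalIntegral.integral_sub (by simp) (by apply Continuous.intervalIntegrable; fun_prop)]
      simp
      norm_num
    rw [← h2]
    apply intervalIntegral.integral_mono_on (by norm_num)
    · apply Continuous.intervalIntegrable; fun_prop
    · apply Continuous.intervalIntegrable; fun_prop
    · intro x _
      have := Real.add_one_le_exp (-x ^ 2)
      linarith
  unfold erf
  have h3 : 1 < 2 / Real.sqrt Real.pi := by
    rw [lt_div_iff₀ (by positivity)]
    linarith [sqrt_pi_lt_two]
  nlinarith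

lemma gtilde_hasDerivAt (n Z x : ℝ) (hn : 0 < n) :
    HasDerivAt (gtilde n Z)
      (x / (8 * n) * gtilde n Z x
        + Z / (4 * Real.sqrt Real.pi) * Real.exp (-x ^ 2 / (16 * n))) x := by
  have h8 : 0 < Real.sqrt (8 * n) := by positivity
  have e1 : HasDerivAt (fun y : ℝ => y / Real.sqrt (8 * n)) (1 / Real.sqrt (8 * n)) x :=
    (hasDerivAt_id x).div_const _
  have e2 := (erf_hasDerivAt (x / Real.sqrt (8 * n))).comp x e1
  have e3 : HasDerivAt (fun y : ℝ => y ^ 2 / (16 * n)) (2 * x / (16 * n)) x := by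
    simpa using (hasDerivAt_pow 2 x).div_const (16 * n)
  have e4 := e3.exp
  have e5 := (e2.const_mul (Real.sqrt (n / 8) * Z)).mul e4
  have hs : Real.sqrt (n / 8) = Real.sqrt (8 * n) / 8 := by
    rw [show n / 8 = (8 * n) / 8 ^ 2 by ring, Real.sqrt_div (by positivity),
      Real.sqrt_sq (by norm_num)]
  have hexp : Real.exp (-(x / Real.sqrt (8 * n)) ^ 2) * Real.exp (x ^ 2 / (16 * n))
      = Real.exp (-x ^ 2 / (16 * n)) := by
    rw [← Real.exp_add]
    congr 1
    rw [div_pow, Real.sq_sqrt (by positivity)]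
    field_simp
    ring
  refine HasDerivAt.congr_deriv (f := gtilde n Z) e5 ?_
  simp only [Function.comp]
  rw [← hexp]
  unfold gtilde
  rw [hs]
  have hp : 0 < Real.sqrt Real.pi := by positivity
  field_simp
  ring

lemma gtilde_nonneg (n Z x : ℝ) (hZ : 0 ≤ Z) (hx : 0 ≤ x) : 0 ≤ gtilde n Z x := by
  unfold gtilde
  have : 0 ≤ erf (x / Real.sqrt (8 * n)) := by
    rw [← erf_zero']; exact erf_mono (by positivity)
  positivity

lemma gtilde_nonpos (n Z x : ℝ) (hZ : 0 ≤ Z) (hx : x ≤ 0) : gtilde n Z x ≤ 0 := by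
  unfold gtilde
  have : erf (x / Real.sqrt (8 * n)) ≤ 0 := by
    rw [← erf_zero']; exact erf_mono (div_nonpos_of_nonpos_of_nonneg hx (by positivity))
  exact mul_nonpos_of_nonpos_of_nonneg
    (mul_nonpos_of_nonneg_of_nonpos (by positivity) this) (by positivity)

lemma gtilde_monoOn (n Z : ℝ) (hn : 0 < n) (hZ : 0 ≤ Z) : MonotoneOn (gtilde n Z) (Set.Ici 0) := by
  apply monotoneOn_of_deriv_nonneg (convex_Ici 0)
  · intro x _; exact (gtilde_hasDerivAt n Z x hn).continuousAt.continuousWithinAt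
  · intro x _; exact (gtilde_hasDerivAt n Z x hn).differentiableAt.differentiableWithinAt
  · intro x hx
    rw [interior_Ici] at hx
    have hx' : 0 < x := hx
    rw [(gtilde_hasDerivAt n Z x hn).deriv]
    have := gtilde_nonneg n Z x hZ hx'.le
    positivity

lemma gtilde_lip (n Z U : ℝ) (hn : 0 < n) (hZ : 0 ≤ Z) (hU : 0 < U) (hg : gtilde n Z U = 1)
    (x y : ℝ) (hx : x ∈ Set.Icc 0 U) (hy : y ∈ Set.Icc 0 U) :
    |gtilde n Z y - gtilde n Z x| ≤ (U / (8 * n) + Z / 4) * |y - x| := by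
  have := Convex.norm_image_sub_le_of_norm_hasDerivWithin_le (f := gtilde n Z)
    (f' := fun x => x / (8 * n) * gtilde n Z x
        + Z / (4 * Real.sqrt Real.pi) * Real.exp (-x ^ 2 / (16 * n)))
    (C := U / (8 * n) + Z / 4) (s := Set.Icc 0 U)
    (fun x _ => (gtilde_hasDerivAt n Z x hn).hasDerivWithinAt) ?_ (convex_Icc 0 U) hx hy
  · simpa [Real.norm_eq_abs] using this
  · rintro z ⟨hz0, hz1⟩
    have h0 := gtilde_nonneg n Z z hZ hz0
    have h1 : gtilde n Z z ≤ 1 := by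
      rw [← hg]; exact gtilde_monoOn n Z hn hZ hz0 hU.le hz1
    rw [Real.norm_eq_abs, abs_of_nonneg (by positivity)]
    have a1 : z / (8 * n) * gtilde n Z z ≤ U / (8 * n) * 1 := by gcongr
    have a2 : Z / (4 * Real.sqrt Real.pi) * Real.exp (-z ^ 2 / (16 * n)) ≤ Z / 4 * 1 := by
      have : (1:ℝ) ≤ Real.sqrt Real.pi := by
        rw [Real.one_le_sqrt]; linarith [Real.pi_gt_three]
      gcongr
      · linarith
      · rw [Real.exp_le_one_iff]
        apply div_nonpos_of_nonpos_of_nonneg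
        · nlinarith [sq_nonneg z]
        · positivity
    linarith

lemma gconf_eq (n Z U : ℝ) (hn : 0 < n) (hZ : 0 ≤ Z) (hU : 0 < U) (hg : gtilde n Z U = 1) (x : ℝ) :
    gconf n Z x = gtilde n Z (max 0 (min x U)) := by
  unfold gconf
  rcases le_total x 0 with hx | hx
  · rw [min_eq_left (hx.trans hU.le), max_eq_left hx, max_eq_right (gtilde_nonpos n Z x hZ hx)]
    have : gtilde n Z 0 = 0 := by simp [gtilde, erf_zero']
    rw [this]; norm_num
  · rw [max_eq_left (gtilde_nonneg n Z x hZ hx), max_eq_right (le_min hx hU.le)]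
    rcases le_total x U with h | h
    · rw [min_eq_left h, min_eq_left]
      rw [← hg]; exact gtilde_monoOn n Z hn hZ hx hU.le h
    · rw [min_eq_right h, hg, min_eq_right]
      rw [← hg]; exact gtilde_monoOn n Z hn hZ hU.le hx h

lemma clamp_step (n U x x' b B : ℝ) (hn : 1 ≤ n) (hU : 0 < U) (hb : |b| ≤ B)
    (hx' : x' = if (0 ≤ x ∧ x ≤ U) ∨ (x < 0 ∧ 0 < b) ∨ (U < x ∧ b < 0)
      then (1 - 1 / n) * x + b else (1 - 1 / n) * x) :
    |max 0 (min x' U) - max 0 (min x U)| ≤ U / n + B := by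
  obtain ⟨hb1, hb2⟩ := abs_le.mp hb
  have hr0 : 0 ≤ 1 / n := by positivity
  have hr1 : 1 / n ≤ 1 := by rw [div_le_one (by linarith)]; exact hn
  rw [show U / n = 1 / n * U by ring]
  generalize 1 / n = r at *
  have hrU : 0 ≤ r * U := by positivity
  have hB : 0 ≤ B := (abs_nonneg b).trans hb
  rcases lt_or_ge x 0 with hx | hx
  · rw [min_eq_left (by linarith : x ≤ U), max_eq_left hx.le, sub_zero, abs_of_nonneg (le_max_left _ _)]
    apply max_le (by linarith)
    apply (min_le_left _ _).trans
    have h1 : (1 - r) * x ≤ 0 := mul_nonpos_of_nonneg_of_nonpos (by linarith) hx.le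
    rw [hx']; split_ifs <;> linarith
  rcases le_or_gt x U with hxU | hxU
  · have h1 : |x' - x| ≤ r * U + B := by
      rw [hx', if_pos (Or.inl ⟨hx, hxU⟩)]
      have : r * x ≤ r * U := by gcongr
      have : 0 ≤ r * x := by positivity
      rw [abs_le]; constructor <;> linarith
    refine le_trans ?_ h1
    calc |max 0 (min x' U) - max 0 (min x U)| ≤ |min x' U - min x U| := by
          rw [max_comm 0, max_comm 0]
          exact abs_max_sub_max_le_abs _ _ _
      _ ≤ |x' - x| := by
        rw [min_comm x', min_comm x]
        simpa using abs_min_sub_min_le_max U x' U x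
  · rw [min_eq_right hxU.le, max_eq_right hU.le]
    have h0 : (1 - r) * U ≤ (1 - r) * x := by
      apply mul_le_mul_of_nonneg_left hxU.le; linarith
    have h1 : U - r * U - B ≤ x' := by
      rw [hx']; split_ifs <;> linarith
    have h2 : max 0 (min x' U) ≤ U := max_le hU.le (min_le_right _ _)
    have h3 : U - r * U - B ≤ max 0 (min x' U) :=
      le_trans (le_min h1 (by linarith)) (le_max_right _ _)
    rw [abs_le]; constructor <;> linarith

lemma U_bound (n Z U L : ℝ) (hn : 32 ≤ n) (hZ : Z * Real.exp L = 1) (hL : 1 ≤ L)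
    (hU : 0 < U) (hg : gtilde n Z U = 1) : U ^ 2 ≤ 16 * n * L := by
  by_contra! h
  have hZ0 : 0 < Z := by
    by_contra! h'
    have := mul_nonpos_of_nonpos_of_nonneg h' (Real.exp_pos L).le
    linarith
  have hy : Real.sqrt (16 * n * L) ≤ U := by
    rw [Real.sqrt_le_left hU.le]; exact h.le
  have h1 := gtilde_monoOn n Z (by linarith) hZ0.le (Real.sqrt_nonneg (16 * n * L)) hU.le hy
  rw [hg] at h1
  unfold gtilde at h1
  rw [Real.sq_sqrt (by positivity), show 16 * n * L / (16 * n) = L by field_simp] at h1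
  have h2 : 2 ≤ Real.sqrt (n / 8) := by
    apply Real.le_sqrt_of_sq_le; linarith
  have h3 : 1 ≤ Real.sqrt (16 * n * L) / Real.sqrt (8 * n) := by
    rw [one_le_div (by positivity)]
    apply Real.sqrt_le_sqrt; nlinarith
  have h4 : 1 / 2 < erf (Real.sqrt (16 * n * L) / Real.sqrt (8 * n)) :=
    erf_one_gt.trans_le (erf_mono h3)
  have h5 : Real.sqrt (n / 8) * Z * erf (Real.sqrt (16 * n * L) / Real.sqrt (8 * n)) * Real.exp L
    = Real.sqrt (n / 8) * erf (Real.sqrt (16 * n * L) / Real.sqrt (8 * n)) * (Z * Real.exp L) := by ring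
  rw [h5, hZ] at h1
  nlinarith

lemma gconf_step (n Z U L lam P x x' b : ℝ) (hlam : 0 ≤ lam) (hL : 1 ≤ L)
    (hn : 32 * max lam 1 * L ≤ n) (hZ : Z * Real.exp L = 1)
    (hP : 0 < P) (hZP : Real.sqrt lam * Z ≤ 1 / P)
    (hU : 0 < U) (hg : gtilde n Z U = 1) (hb : |b| ≤ 1 / max (Real.sqrt lam) 1)
    (hx' : x' = if (0 ≤ x ∧ x ≤ U) ∨ (x < 0 ∧ 0 < b) ∨ (U < x ∧ b < 0)
      then (1 - 1 / n) * x + b else (1 - 1 / n) * x) :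
    lam * |gconf n Z x' - gconf n Z x| ≤
      1 / 4 * Real.sqrt (32 * max lam 1 * L / n) + 1 / 2 * (1 / P) := by
  have hm : 1 ≤ max lam 1 := le_max_right _ _
  have hn32 : 32 ≤ n := by nlinarith
  have hn0 : 0 < n := by linarith
  have hZ0 : 0 < Z := by
    by_contra! h'
    have := mul_nonpos_of_nonpos_of_nonneg h' (Real.exp_pos L).le
    linarith
  have hUb := U_bound n Z U L hn32 hZ hL hU hg
  rw [gconf_eq n Z U hn0 hZ0.le hU hg, gconf_eq n Z U hn0 hZ0.le hU hg]
  have hc : ∀ y : ℝ, max 0 (min y U) ∈ Set.Icc 0 U :=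
    fun y => ⟨le_max_left _ _, max_le hU.le (min_le_right _ _)⟩
  have h1 := gtilde_lip n Z U hn0 hZ0.le hU hg _ _ (hc x) (hc x')
  have h2 := clamp_step n U x x' b _ (by linarith) hU hb hx'
  have hq : max lam 1 = (max (Real.sqrt lam) 1) ^ 2 := by
    rcases le_total lam 1 with h | h
    · rw [max_eq_right h, max_eq_right (by rw [Real.sqrt_le_one]; exact h)]; norm_num
    · rw [max_eq_left h, max_eq_left (by rw [Real.one_le_sqrt]; exact h), Real.sq_sqrt hlam]
  have hq1 : 1 ≤ max (Real.sqrt lam) 1 := le_max_right _ _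
  have hq2 : Real.sqrt lam ≤ max (Real.sqrt lam) 1 := le_max_left _ _
  set q := max (Real.sqrt lam) 1 with hqdef
  rw [hq] at hn ⊢
  set s := Real.sqrt (32 * q ^ 2 * L / n) with hs
  have hs0 : 0 ≤ s := Real.sqrt_nonneg _
  have hs1 : s ≤ 1 := by
    rw [hs, Real.sqrt_le_one]; rw [div_le_one hn0]; exact hn
  have hss : s ^ 2 = 32 * q ^ 2 * L / n := Real.sq_sqrt (by positivity)
  have hUn : U / n ≤ s / q := by
    apply (pow_le_pow_iff_left₀ (by positivity) (by positivity) two_ne_zero).mp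
    rw [div_pow, div_pow, hss]
    have : 32 * q ^ 2 * L / n / q ^ 2 = 32 * n * L / n ^ 2 := by field_simp
    rw [this]
    gcongr
    nlinarith
  have hsq : s / q ≤ 1 / q := by gcongr
  have hU8 : U / (8 * n) = U / n / 8 := by field_simp
  have hr0 := Real.sqrt_nonneg lam
  have hrr := Real.mul_self_sqrt hlam
  have h3 : |gtilde n Z (max 0 (min x' U)) - gtilde n Z (max 0 (min x U))| ≤
      (s / q / 8 + Z / 4) * (2 * (1 / q)) := by
    refine h1.trans ?_
    rw [hU8]
    gcongr
    linarith
  have h4 : lam ≤ q * Real.sqrt lam := by nlinarith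
  have h5 : lam ≤ q * q := by nlinarith
  calc _ ≤ lam * ((s / q / 8 + Z / 4) * (2 * (1 / q))) := by gcongr
    _ = 1 / 4 * (s * (lam / (q * q))) + 1 / 2 * (lam / q * Z) := by field_simp; ring
    _ ≤ 1 / 4 * (s * 1) + 1 / 2 * (Real.sqrt lam * Z) := by
      gcongr
      · rw [div_le_one (by positivity)]; exact h5
      · rw [div_le_iff₀ (by positivity)]; linarith
    _ ≤ _ := by linarith

set_option maxHeartbeats 2000000 in
/-- **Lemma 2: all experts and combiners in smoothed OGD move slowly (M = 2).** -/
theorem smoothed_ogd_slow_movement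
    (d : ℕ) (W : Set (EuclideanSpace ℝ (Fin d)))
    (hWne : W.Nonempty) (hWconv : Convex ℝ W) (hWclosed : IsClosed W)
    (G D : ℝ) (hG : 0 < G) (hD : 0 < D)
    (hdiam : ∀ p ∈ W, ∀ q ∈ W, ‖p - q‖ ≤ D)
    (T : ℕ) (f : ℕ → EuclideanSpace ℝ (Fin d) → ℝ)
    (hconv : ∀ t, 1 ≤ t → t ≤ T → ConvexOn ℝ Set.univ (f t))
    (hdiff : ∀ t, 1 ≤ t → t ≤ T → Differentiable ℝ (f t))
    (hgrad : ∀ t, 1 ≤ t → t ≤ T → ∀ p ∈ W, ‖gradient (f t) p‖ ≤ G)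
    (hrange : ∀ t, 1 ≤ t → t ≤ T → ∀ p ∈ W, f t p ∈ Set.Icc 0 (G * D))
    (lam : ℝ) (hlam : 0 ≤ lam)
    (Z : ℝ) (hZdef : Z = 1 / (T : ℝ))
    (hT : (T : ℝ) ≥ max (Real.sqrt lam * Real.logb 2 (T : ℝ)) (Real.exp 1))
    (K : ℕ)
    (hK : (K : ℤ) = ⌊Real.logb 2 ((T : ℝ) / (32 * max lam 1 * Real.log (1 / Z)))⌋ + 1)
    (Ufn : ℕ → ℝ)
    (hU : ∀ i, 1 ≤ i → i ≤ K → 0 < Ufn i ∧ gtilde (nfun T i) Z (Ufn i) = 1)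
    (hUuniq : ∀ i, 1 ≤ i → i ≤ K → ∀ y, 0 < y → gtilde (nfun T i) Z y = 1 → y = Ufn i)
    (w v : ℕ → ℕ → EuclideanSpace ℝ (Fin d))
    (hwW1 : ∀ i, 1 ≤ i → i ≤ K → w i 1 ∈ W)
    (hwrec : ∀ i, 1 ≤ i → i ≤ K → ∀ t, 1 ≤ t → t ≤ T →
      w i (t + 1) ∈ W ∧ ∀ y ∈ W,
        ‖w i t - etafun T D G lam i • gradient (f t) (w i t) - w i (t + 1)‖
          ≤ ‖w i t - etafun T D G lam i • gradient (f t) (w i t) - y‖)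
    (bb : ℕ → ℕ → ℝ)
    (hbb : ∀ i t, bb i t =
      (((f t (v (i - 1) t) + lam * G * ‖v (i - 1) t - v (i - 1) (t + 1)‖)
          - (f t (w i t) + lam * G * ‖w i t - w i (t + 1)‖)) / ((1 + 2) * G * D))
        / max (Real.sqrt lam) 1)
    (xdev : ℕ → ℕ → ℝ)
    (hxdev1 : ∀ i, 2 ≤ i → i ≤ K → xdev i 1 = 0)
    (hxdevrec : ∀ i, 2 ≤ i → i ≤ K → ∀ t, 1 ≤ t → t ≤ T →
      xdev i (t + 1) =
        if (0 ≤ xdev i t ∧ xdev i t ≤ Ufn i) ∨ (xdev i t < 0 ∧ 0 < bb i t)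
            ∨ (Ufn i < xdev i t ∧ bb i t < 0)
        then (1 - 1 / nfun T i) * xdev i t + bb i t
        else (1 - 1 / nfun T i) * xdev i t)
    (hv1 : ∀ t, v 1 t = w 1 t)
    (hv : ∀ i, 2 ≤ i → i ≤ K → ∀ t, 1 ≤ t → t ≤ T + 1 →
      v i t = (1 - gconf (nfun T i) Z (xdev i t)) • v (i - 1) t
                + gconf (nfun T i) Z (xdev i t) • w i t)
    :
    ∀ i, 1 ≤ i → i ≤ K → ∀ t, 1 ≤ t → t ≤ T →
      lam * ‖w i t - w i (t + 1)‖ ≤ 2 * D ∧ lam * ‖v i t - v i (t + 1)‖ ≤ 2 * D := by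
  intro i0 hi01 hi0K
  have hK1 : 1 ≤ K := hi01.trans hi0K
  have hTe : Real.exp 1 ≤ (T : ℝ) := (le_max_right _ _).trans hT
  have hTs : Real.sqrt lam * Real.logb 2 (T : ℝ) ≤ T := (le_max_left _ _).trans hT
  have hT0 : (0:ℝ) < T := (Real.exp_pos 1).trans_le hTe
  have hZ1 : 1 / Z = (T : ℝ) := by rw [hZdef]; simp
  rw [hZ1] at hK
  set L := Real.log (T : ℝ) with hLdef
  have hL : 1 ≤ L := by rw [hLdef, Real.le_log_iff_exp_le hT0]; exact hTe
  have hZL : Z * Real.exp L = 1 := by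
    rw [hLdef, Real.exp_log hT0, hZdef]; field_simp
  have hm : 1 ≤ max lam 1 := le_max_right _ _
  have hml : lam ≤ max lam 1 := le_max_left _ _
  set m := max lam 1 with hmdef
  set P := Real.logb 2 (T : ℝ) with hPdef
  have hP : 0 < P := by
    apply Real.logb_pos (by norm_num)
    have := Real.add_one_lt_exp (one_ne_zero : (1:ℝ) ≠ 0)
    linarith
  have hZP : Real.sqrt lam * Z ≤ 1 / P := by
    rw [hZdef, mul_one_div, div_le_div_iff₀ hT0 hP]; linarith
  -- the key power bound
  have hpow : (2:ℝ) ^ (((K : ℤ) - 1 : ℤ)) ≤ (T : ℝ) / (32 * m * L) := by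
    have h1 : (((K : ℤ) - 1 : ℤ) : ℝ) ≤ Real.logb 2 ((T : ℝ) / (32 * m * L)) := by
      rw [hK]
      simpa using Int.floor_le (Real.logb 2 ((T : ℝ) / (32 * m * L)))
    rw [Real.le_logb_iff_rpow_le (by norm_num) (by positivity)] at h1
    rwa [Real.rpow_intCast] at h1
  have hKP : (K : ℝ) ≤ P := by
    rw [hPdef, Real.le_logb_iff_rpow_le (by norm_num) hT0, Real.rpow_natCast]
    have h1 : (2:ℝ) ^ K = 2 * (2:ℝ) ^ (((K : ℤ) - 1 : ℤ)) := by
      rw [zpow_sub₀ (by norm_num)]; simp; ring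
    rw [h1]
    rw [le_div_iff₀ (by positivity)] at hpow
    have h2 : (0:ℝ) < (2:ℝ) ^ (((K : ℤ) - 1 : ℤ)) := by positivity
    have h3 : 1 ≤ m * L := by nlinarith
    nlinarith
  have hn : ∀ i, 1 ≤ i → i ≤ K → 32 * m * L ≤ nfun T i := by
    intro i _ hiK
    unfold nfun
    have h1 : (2:ℝ) ^ ((1:ℤ) - (K:ℤ)) ≤ (2:ℝ) ^ ((1:ℤ) - (i:ℤ)) := by
      apply zpow_le_zpow_right₀ (by norm_num); omega
    have h2 : 32 * m * L ≤ (T:ℝ) * (2:ℝ) ^ ((1:ℤ) - (K:ℤ)) := by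
      rw [le_div_iff₀ (by positivity)] at hpow
      have h3 : (2:ℝ) ^ ((1:ℤ) - (K:ℤ)) = ((2:ℝ) ^ ((K:ℤ) - 1))⁻¹ := by
        rw [← zpow_neg]; congr 1; ring
      rw [h3, ← div_eq_mul_inv, le_div_iff₀ (by positivity)]
      linarith
    exact h2.trans (by gcongr)
  have hn0 : ∀ i, 0 < nfun T i := by intro i; unfold nfun; positivity
  -- membership
  have hwW : ∀ i, 1 ≤ i → i ≤ K → ∀ t, 1 ≤ t → t ≤ T + 1 → w i t ∈ W := by
    intro i h1 h2 t ht1 ht2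
    rcases Nat.lt_or_ge 1 t with h | h
    · obtain ⟨u, rfl⟩ : ∃ u, t = u + 1 := ⟨t - 1, by omega⟩
      exact (hwrec i h1 h2 u (by omega) (by omega)).1
    · rw [show t = 1 by omega]; exact hwW1 i h1 h2
  have hg01 : ∀ n Z x, 0 ≤ gconf n Z x ∧ gconf n Z x ≤ 1 := by
    intro n Z x; unfold gconf
    exact ⟨le_min (le_max_right _ _) zero_le_one, min_le_right _ _⟩
  have hvW : ∀ i, 1 ≤ i → i ≤ K → ∀ t, 1 ≤ t → t ≤ T + 1 → v i t ∈ W := by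
    intro i h1
    induction i, h1 using Nat.le_induction with
    | base => intro h2 t ht1 ht2; rw [hv1]; exact hwW 1 le_rfl h2 t ht1 ht2
    | succ i hi ih =>
      intro h2 t ht1 ht2
      rw [hv (i + 1) (by omega) h2 t ht1 ht2]
      obtain ⟨a, b⟩ := hg01 (nfun T (i+1)) Z (xdev (i+1) t)
      exact hWconv (ih (by omega) t ht1 ht2) (hwW (i+1) (by omega) h2 t ht1 ht2)
        (by linarith) a (by ring)
  -- experts
  have hwmove : ∀ i, 1 ≤ i → i ≤ K → ∀ t, 1 ≤ t → t ≤ T →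
      lam * ‖w i t - w i (t + 1)‖ ≤ 1 / 4 * D := by
    intro i h1 h2 t ht1 ht2
    have hwt := hwW i h1 h2 t ht1 (by omega)
    have hp := (hwrec i h1 h2 t ht1 ht2).2 _ hwt
    have hgr := hgrad t ht1 ht2 _ hwt
    have heta : 0 ≤ etafun T D G lam i := by unfold etafun; positivity
    set g := etafun T D G lam i • gradient (f t) (w i t) with hgdef
    have hgn : ‖g‖ ≤ etafun T D G lam i * G := by
      rw [hgdef, norm_smul, Real.norm_eq_abs, abs_of_nonneg heta]; gcongr
    have e1 : ‖w i t - g - w i t‖ = ‖g‖ := by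
      rw [show w i t - g - w i t = -g by abel, norm_neg]
    rw [e1] at hp
    have e2 : ‖w i t - w i (t + 1)‖ ≤ 2 * (etafun T D G lam i * G) := by
      calc ‖w i t - w i (t + 1)‖ = ‖(w i t - g - w i (t+1)) + g‖ := by congr 1; abel
        _ ≤ ‖w i t - g - w i (t+1)‖ + ‖g‖ := norm_add_le _ _
        _ ≤ _ := by linarith
    have hni := hn i h1 h2
    have e3 : lam * Real.sqrt (1 / ((1 + 2 * lam) * nfun T i)) ≤ 1 / 8 := by
      have hq : 64 * lam ^ 2 ≤ (1 + 2 * lam) * nfun T i := by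
        have a1 : 32 * lam ≤ nfun T i := by nlinarith
        nlinarith [hn0 i]
      have hpos : 0 < (1 + 2 * lam) * nfun T i := by have := hn0 i; positivity
      have hsq := Real.sq_sqrt (show (0:ℝ) ≤ 1 / ((1 + 2 * lam) * nfun T i) by positivity)
      apply (pow_le_pow_iff_left₀ (by positivity) (by positivity) two_ne_zero).mp
      rw [mul_pow, hsq, mul_one_div, div_le_iff₀ hpos]
      linarith
    have e4 : etafun T D G lam i * G = D * Real.sqrt (1 / ((1 + 2 * lam) * nfun T i)) := by
      unfold etafun; field_simp
    rw [e4] at e2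
    calc lam * ‖w i t - w i (t + 1)‖
        ≤ lam * (2 * (D * Real.sqrt (1 / ((1 + 2 * lam) * nfun T i)))) := by gcongr
      _ = 2 * D * (lam * Real.sqrt (1 / ((1 + 2 * lam) * nfun T i))) := by ring
      _ ≤ 2 * D * (1 / 8) := by gcongr
      _ = _ := by ring
  -- combiners
  set s : ℕ → ℝ := fun i => Real.sqrt (32 * m * L / nfun T i) with hsdef
  have hs0 : ∀ i, 0 ≤ s i := fun i => Real.sqrt_nonneg _
  have hs1 : ∀ i, 1 ≤ i → i ≤ K → s i ≤ 1 := by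
    intro i h1 h2
    rw [hsdef]; simp only
    rw [Real.sqrt_le_one, div_le_one (hn0 i)]
    exact hn i h1 h2
  have hsstep : ∀ i, s i ≤ 71 / 100 * s (i + 1) := by
    intro i
    have a := hs0 (i+1)
    apply (pow_le_pow_iff_left₀ (hs0 i) (by positivity) two_ne_zero).mp
    have hpi := hn0 i
    have hpi' := hn0 (i+1)
    have b1 : s i ^ 2 = 32 * m * L / nfun T i := Real.sq_sqrt (by positivity)
    have b2 : s (i+1) ^ 2 = 32 * m * L / nfun T (i+1) := Real.sq_sqrt (by positivity)
    have b3 : nfun T i = 2 * nfun T (i+1) := by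
      unfold nfun
      rw [show (1:ℤ) - (i:ℤ) = (1 - ((i+1 : ℕ):ℤ)) + 1 by push_cast; ring,
        zpow_add₀ (by norm_num)]
      ring
    have b4 : s (i+1) ^ 2 = 2 * s i ^ 2 := by rw [b1, b2, b3]; field_simp
    rw [mul_pow, b4]
    nlinarith [sq_nonneg (s i)]
  have hfin : ∀ i, 1 ≤ i → i ≤ K →
      (1 / 4 + 7 / 8 * s i + 1 / 2 * ((i : ℝ) / P)) * D ≤ 2 * D := by
    intro i h1 h2
    have a := hs1 i h1 h2
    have b : (i : ℝ) / P ≤ 1 := by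
      rw [div_le_one hP]
      have : (i : ℝ) ≤ K := by exact_mod_cast h2
      linarith
    gcongr
    linarith
  have hvmove : ∀ i, 1 ≤ i → i ≤ K → ∀ t, 1 ≤ t → t ≤ T →
      lam * ‖v i t - v i (t + 1)‖ ≤ (1 / 4 + 7 / 8 * s i + 1 / 2 * ((i : ℝ) / P)) * D := by
    intro i h1
    induction i, h1 using Nat.le_induction with
    | base =>
      intro h2 t ht1 ht2
      rw [hv1, hv1]
      refine (hwmove 1 le_rfl h2 t ht1 ht2).trans ?_
      have := hs0 1
      have : 0 ≤ ((1:ℕ) : ℝ) / P := by positivity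
      gcongr
      linarith
    | succ i hi ih =>
      intro h2 t ht1 ht2
      have hih := ih (by omega) t ht1 ht2
      have hfi := hih.trans (hfin i hi (by omega))
      have hwm := hwmove (i+1) (by omega) h2 t ht1 ht2
      have hvt := hvW i hi (by omega) t ht1 (by omega)
      have hwt := hwW (i+1) (by omega) h2 t ht1 (by omega)
      have hvt' := hvW i hi (by omega) (t+1) (by omega) (by omega)
      have hwt' := hwW (i+1) (by omega) h2 (t+1) (by omega) (by omega)
      have hb : |bb (i+1) t| ≤ 1 / max (Real.sqrt lam) 1 := by
        have hq : 0 < max (Real.sqrt lam) 1 := lt_max_of_lt_right one_pos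
        rw [hbb, abs_div, abs_of_pos hq]
        gcongr
        rw [abs_div, abs_of_pos (by positivity : 0 < (1 + 2) * G * D),
          div_le_one (by positivity)]
        rw [Nat.add_sub_cancel]
        obtain ⟨c1, c2⟩ := hrange t ht1 ht2 _ hvt
        obtain ⟨c3, c4⟩ := hrange t ht1 ht2 _ hwt
        have d1 : 0 ≤ lam * G * ‖v i t - v i (t+1)‖ := by positivity
        have d2 : 0 ≤ lam * G * ‖w (i+1) t - w (i+1) (t+1)‖ := by positivity
        have d3 : lam * G * ‖v i t - v i (t+1)‖ ≤ 2 * (G * D) := by nlinarith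
        have d4 : lam * G * ‖w (i+1) t - w (i+1) (t+1)‖ ≤ 2 * (G * D) := by nlinarith
        rw [abs_le]; constructor <;> linarith
      obtain ⟨hU0, hU1⟩ := hU (i+1) (by omega) h2
      have hstep := gconf_step (nfun T (i+1)) Z (Ufn (i+1)) L lam P (xdev (i+1) t)
        (xdev (i+1) (t+1)) (bb (i+1) t) hlam hL (hn (i+1) (by omega) h2) hZL hP hZP hU0 hU1 hb
        (hxdevrec (i+1) (by omega) h2 t ht1 ht2)
      have hstep' : lam * |gconf (nfun T (i+1)) Z (xdev (i+1) (t+1))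
          - gconf (nfun T (i+1)) Z (xdev (i+1) t)| ≤ 1 / 4 * s (i+1) + 1 / 2 * (1 / P) := hstep
      rw [hv (i+1) (by omega) h2 t ht1 (by omega),
        hv (i+1) (by omega) h2 (t+1) (by omega) (by omega), Nat.add_sub_cancel]
      obtain ⟨a, b⟩ := hg01 (nfun T (i+1)) Z (xdev (i+1) t)
      set c := gconf (nfun T (i+1)) Z (xdev (i+1) t)
      set c' := gconf (nfun T (i+1)) Z (xdev (i+1) (t+1))
      have hdec : ((1 - c) • v i t + c • w (i+1) t) - ((1 - c') • v i (t+1) + c' • w (i+1) (t+1))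
          = (1 - c) • (v i t - v i (t+1)) + c • (w (i+1) t - w (i+1) (t+1))
            + (c' - c) • (v i (t+1) - w (i+1) (t+1)) := by module
      have hnorm : ‖((1 - c) • v i t + c • w (i+1) t)
            - ((1 - c') • v i (t+1) + c' • w (i+1) (t+1))‖
          ≤ (1 - c) * ‖v i t - v i (t+1)‖ + c * ‖w (i+1) t - w (i+1) (t+1)‖ + |c' - c| * D := by
        rw [hdec]
        refine (norm_add₃_le).trans ?_
        rw [norm_smul, norm_smul, norm_smul, Real.norm_eq_abs, Real.norm_eq_abs, Real.norm_eq_abs,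
          abs_of_nonneg a, abs_of_nonneg (by linarith : 0 ≤ 1 - c)]
        gcongr
        exact hdiam _ hvt' _ hwt'
      have hss := hsstep i
      have hiP : 0 ≤ (i : ℝ) / P := by positivity
      have hwm' : lam * ‖w (i+1) t - w (i+1) (t+1)‖ ≤
          (1 / 4 + 7 / 8 * s i + 1 / 2 * ((i : ℝ) / P)) * D := by
        refine hwm.trans ?_
        have := hs0 i
        gcongr
        linarith
      set Q := (1 / 4 + 7 / 8 * s i + 1 / 2 * ((i : ℝ) / P)) with hQ
      have hcast : (((i + 1 : ℕ) : ℝ)) / P = (i : ℝ) / P + 1 / P := by push_cast; ring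
      calc _ ≤ lam * ((1 - c) * ‖v i t - v i (t+1)‖ + c * ‖w (i+1) t - w (i+1) (t+1)‖
            + |c' - c| * D) := by gcongr
        _ = (1 - c) * (lam * ‖v i t - v i (t+1)‖) + c * (lam * ‖w (i+1) t - w (i+1) (t+1)‖)
            + (lam * |c' - c|) * D := by ring
        _ ≤ (1 - c) * (Q * D) + c * (Q * D) + (1 / 4 * s (i+1) + 1 / 2 * (1 / P)) * D := by
          have : 0 ≤ 1 - c := by linarith
          gcongr
        _ = (Q + 1 / 4 * s (i+1) + 1 / 2 * (1 / P)) * D := by ring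
        _ ≤ _ := by
          rw [hcast]
          have := hs0 (i+1)
          apply mul_le_mul_of_nonneg_right _ hD.le
          rw [hQ]
          linarith
  intro t ht1 ht2
  have := hwmove i0 hi01 hi0K t ht1 ht2
  exact ⟨by linarith, (hvmove i0 hi01 hi0K t ht1 ht2).trans (hfin i0 hi01 hi0K)⟩
end
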